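/- (Uniqueness theorem.) Let π/3 ≤ a₁ < 2π/5 < a₂ < π and 2a₁ + a₂/2 ≥ π. Let p₁, p₂, q₁, q₂ and p̃₁, p̃₂, q̃₁, q̃₂ be functions in L²(0, π; ℂ) with p_k = p̃_k = 0 a.e. on (0, a₁) and q_k = q̃_k = 0 a.e. on (0, a₂) for k = 1, 2. Let K^m, G^m be built from (p₁, p₂, q₁, q₂) and K̃^m, G̃^m be built (by the same formulas) from (p̃₁, p̃₂, q̃₁, q̃₂). If K^m = K̃^m a.e. on (a₁/2, π−a₁/2) and G^m = G̃^m a.e. on (a₁/2, π−a₁/2) for both m = 0 and m = 1, then p_k = p̃_k a.e. on (a₁, π) and q_k = q̃_k a.e. on (a₂, π) for k = 1, 2. (Equivalently, the four spectra of the boundary value problems D_j(P,Q,m), which determine the functions K^m and G^m, uniquely determine the matrix potentials P on (a₁, π) and Q on (a₂, π).) -/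

import Mathlib

open MeasureTheory Real Set Filter

noncomputable def alpha1 (a₁ : ℝ) (f g : ℝ → ℂ) (x : ℝ) : ℂ :=
  ∫ t in (x + a₁)..π, f t * g (t - x)

noncomputable def alpha2 (a₂ : ℝ) (f g : ℝ → ℂ) (x : ℝ) : ℂ :=
  ∫ t in (x + a₂)..π, f t * g (t - x)

noncomputable def alpha12 (a₁ a₂ : ℝ) (f g : ℝ → ℂ) (x : ℝ) : ℂ :=
  ∫ t in (x + (a₁ + a₂) / 2)..π, f t * g (t - x + (a₂ - a₁) / 2)

noncomputable def alpha21 (a₁ a₂ : ℝ) (f g : ℝ → ℂ) (x : ℝ) : ℂ :=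
  ∫ t in (x + (a₁ + a₂) / 2)..π, f t * g (t - x - (a₂ - a₁) / 2)

noncomputable def Kfun (a₁ a₂ : ℝ) (m : ℕ) (p₁ p₂ q₁ q₂ : ℝ → ℂ) (x : ℝ) : ℂ :=
  (-1 : ℂ) ^ m * p₁ (x + a₁ / 2) + q₁ (x + a₂ / 2)
    - (alpha1 a₁ p₁ p₂ x - alpha1 a₁ p₂ p₁ x) * (Ioo a₁ (π - a₁)).indicator 1 x
    - (alpha2 a₂ q₁ q₂ x - alpha2 a₂ q₂ q₁ x) * (Ioo a₂ (π - a₂)).indicator 1 x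
    + (-1 : ℂ) ^ m *
        (alpha12 a₁ a₂ p₂ q₁ x - alpha12 a₁ a₂ p₁ q₂ x
          + alpha21 a₁ a₂ q₂ p₁ x - alpha21 a₁ a₂ q₁ p₂ x) *
        (Ioo ((a₁ + a₂) / 2) (π - (a₁ + a₂) / 2)).indicator 1 x

noncomputable def Gfun (a₁ a₂ : ℝ) (m : ℕ) (p₁ p₂ q₁ q₂ : ℝ → ℂ) (x : ℝ) : ℂ :=
  (-1 : ℂ) ^ m * p₂ (x + a₁ / 2) + q₂ (x + a₂ / 2)
    - (alpha1 a₁ p₁ p₁ x + alpha1 a₁ p₂ p₂ x) * (Ioo a₁ (π - a₁)).indicator 1 x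
    - (alpha2 a₂ q₁ q₁ x + alpha2 a₂ q₂ q₂ x) * (Ioo a₂ (π - a₂)).indicator 1 x
    - (-1 : ℂ) ^ m *
        (alpha12 a₁ a₂ p₁ q₁ x + alpha12 a₁ a₂ p₂ q₂ x
          + alpha21 a₁ a₂ q₁ p₁ x + alpha21 a₁ a₂ q₂ p₂ x) *
        (Ioo ((a₁ + a₂) / 2) (π - (a₁ + a₂) / 2)).indicator 1 x

/-!
With `P = [[p₁, p₂], [p₂, -p₁]]` and `Q` likewise, every convolution term in `(K^m, G^m)` is a
correlation of two of these matrices, and the parts of `(K^m, G^m)` even and odd in `(-1)^m` are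
`Q - (PP + QQ)` and `P - (PQ + QP)`. A correlation with delays `a, b` vanishes outside a window and
sees its first factor only on `(a + b, π)` and its second only on `(b, π - a)`. The inequality
`π ≤ 2 a₁ + a₂ / 2` puts the stretches of `P` entering `PP` where the odd part has no
correlations, and `2 π / 5 ≤ a₂` does the same for `QQ` in the even part, once `PP` is known. So
one reads off the ends of `P`, hence `PP`, the ends of `Q`, hence `QQ`, all of `Q`, hence
`PQ + QP`, and finally all of `P`.
-/

/-- The correlation of two matrix potentials with delays `a` and `b`, a pair `(f₁, f₂)` encoding
the matrix `[[f₁, f₂], [f₂, -f₁]]`: the components are the `(1, 2)` and `(1, 1)` entries of the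
integrated matrix product. The integrals `α¹`, `α²`, `α¹²`, `α²¹` are `alpha12 a b` for the pairs of
delays `(a₁, a₁)`, `(a₂, a₂)`, `(a₁, a₂)`, `(a₂, a₁)`. -/
noncomputable def potentialCorrelation (a b : ℝ) (f g : ℝ → ℂ × ℂ) : ℝ → ℂ × ℂ :=
  (Ioo ((a + b) / 2) (π - (a + b) / 2)).indicator fun x ↦
    (alpha12 a b (fun t ↦ (f t).1) (fun t ↦ (g t).2) x
        - alpha12 a b (fun t ↦ (f t).2) (fun t ↦ (g t).1) x,
      alpha12 a b (fun t ↦ (f t).1) (fun t ↦ (g t).1) x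
        + alpha12 a b (fun t ↦ (f t).2) (fun t ↦ (g t).2) x)

/-- The coefficient of `(-1) ^ m` in `(K^m, G^m)`, for `p = (p₁, p₂)` and `q = (q₁, q₂)`. -/
noncomputable def oddPart (a₁ a₂ : ℝ) (p q : ℝ → ℂ × ℂ) (x : ℝ) : ℂ × ℂ :=
  p (x + a₁ / 2) - (potentialCorrelation a₁ a₂ p q x + potentialCorrelation a₂ a₁ q p x)

/-- The part of `(K^m, G^m)` independent of `m`, for `p = (p₁, p₂)` and `q = (q₁, q₂)`. -/
noncomputable def evenPart (a₁ a₂ : ℝ) (p q : ℝ → ℂ × ℂ) (x : ℝ) : ℂ × ℂ :=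
  q (x + a₂ / 2) - (potentialCorrelation a₁ a₁ p p x + potentialCorrelation a₂ a₂ q q x)

theorem alpha1_eq_alpha12 (a : ℝ) : alpha1 a = alpha12 a a := by
  ext f g x
  simp [alpha1, alpha12]

theorem alpha2_eq_alpha12 (a : ℝ) : alpha2 a = alpha12 a a := by
  ext f g x
  simp [alpha2, alpha12]

theorem alpha21_eq_alpha12_swap (a b : ℝ) : alpha21 a b = alpha12 b a := by
  ext f g x
  simp only [alpha21, alpha12, add_comm b a]
  congr! 4
  ring

theorem Kfun_prodMk_Gfun_eq (a₁ a₂ : ℝ) (m : ℕ) (p₁ p₂ q₁ q₂ : ℝ → ℂ) (x : ℝ) :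
    (Kfun a₁ a₂ m p₁ p₂ q₁ q₂ x, Gfun a₁ a₂ m p₁ p₂ q₁ q₂ x) =
      (-1 : ℂ) ^ m • oddPart a₁ a₂ (fun t ↦ (p₁ t, p₂ t)) (fun t ↦ (q₁ t, q₂ t)) x
        + evenPart a₁ a₂ (fun t ↦ (p₁ t, p₂ t)) (fun t ↦ (q₁ t, q₂ t)) x := by
  simp only [Kfun, Gfun, oddPart, evenPart, potentialCorrelation, alpha1_eq_alpha12,
    alpha2_eq_alpha12, alpha21_eq_alpha12_swap, add_self_div_two, add_comm a₂ a₁,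
    indicator_apply, Pi.one_apply]
  ext <;> split_ifs <;>
    simp only [Prod.fst_add, Prod.snd_add, Prod.fst_sub, Prod.snd_sub, Prod.smul_fst,
      Prod.smul_snd, Prod.fst_zero, Prod.snd_zero, smul_eq_mul] <;>
    ring

theorem potentialCorrelation_of_notMem {a b x : ℝ} (f g : ℝ → ℂ × ℂ)
    (hx : x ∉ Ioo ((a + b) / 2) (π - (a + b) / 2)) : potentialCorrelation a b f g x = 0 :=
  indicator_of_notMem hx _

theorem alpha12_congr_ae {a b x : ℝ} {f f' g g' : ℝ → ℂ}
    (hx : x ∈ Ioo ((a + b) / 2) (π - (a + b) / 2))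
    (hf : f =ᵐ[volume.restrict (Ioo (a + b) π)] f')
    (hg : g =ᵐ[volume.restrict (Ioo b (π - a))] g') :
    alpha12 a b f g x = alpha12 a b f' g' x := by
  obtain ⟨hax, hxπ⟩ := hx
  have hf := (ae_restrict_iff' measurableSet_Ioo).1 hf
  have hg := (quasiMeasurePreserving_add_right volume (-x + (b - a) / 2)).ae
    ((ae_restrict_iff' measurableSet_Ioo).1 hg)
  simp only [alpha12]
  rw [intervalIntegral.integral_of_le (by linarith), intervalIntegral.integral_of_le (by linarith),
    integral_Ioc_eq_integral_Ioo, integral_Ioc_eq_integral_Ioo]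
  refine setIntegral_congr_ae measurableSet_Ioo ?_
  filter_upwards [hf, hg] with t hft hgt ⟨hxt, htπ⟩
  rw [← add_assoc, ← sub_eq_add_neg] at hgt
  rw [hft ⟨by linarith, htπ⟩, hgt ⟨by linarith, by linarith⟩]

theorem potentialCorrelation_congr_ae {a b : ℝ} {f f' g g' : ℝ → ℂ × ℂ}
    (hf : f =ᵐ[volume.restrict (Ioo (a + b) π)] f')
    (hg : g =ᵐ[volume.restrict (Ioo b (π - a))] g') :
    potentialCorrelation a b f g = potentialCorrelation a b f' g' := by
  refine indicator_congr fun x hx ↦ ?_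
  have hf₁ : (fun t ↦ (f t).1) =ᵐ[volume.restrict (Ioo (a + b) π)] fun t ↦ (f' t).1 :=
    hf.fun_comp Prod.fst
  have hf₂ : (fun t ↦ (f t).2) =ᵐ[volume.restrict (Ioo (a + b) π)] fun t ↦ (f' t).2 :=
    hf.fun_comp Prod.snd
  have hg₁ : (fun t ↦ (g t).1) =ᵐ[volume.restrict (Ioo b (π - a))] fun t ↦ (g' t).1 :=
    hg.fun_comp Prod.fst
  have hg₂ : (fun t ↦ (g t).2) =ᵐ[volume.restrict (Ioo b (π - a))] fun t ↦ (g' t).2 :=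
    hg.fun_comp Prod.snd
  rw [alpha12_congr_ae hx hf₁ hg₁, alpha12_congr_ae hx hf₁ hg₂, alpha12_congr_ae hx hf₂ hg₁,
    alpha12_congr_ae hx hf₂ hg₂]

theorem ae_eq_of_translate_sub_ae_eq {G E : Type*} [AddGroup G] [MeasurableSpace G]
    [MeasurableAdd G] {μ : Measure G} [μ.IsAddRightInvariant] [AddGroup E] {u u' r r' : G → E}
    {c : G} {s w : Set G} (hs : MeasurableSet s) (hw : MeasurableSet w)
    (h : (fun x ↦ u (x + c) - r x) =ᵐ[μ.restrict w] fun x ↦ u' (x + c) - r' x)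
    (hsw : ∀ y ∈ s, y - c ∈ w) (hr : ∀ y ∈ s, r (y - c) = r' (y - c)) :
    u =ᵐ[μ.restrict s] u' := by
  have h_translate :=
    (measurePreserving_sub_right μ c).quasiMeasurePreserving.ae ((ae_restrict_iff' hw).1 h)
  refine (ae_restrict_iff' hs).2 ?_
  filter_upwards [h_translate] with y hy hys
  simpa [hr y hys] using hy (hsw y hys)

/-- The points at which a correlation with both delays `a` evaluates its factors: the second on
`(a, π - a)`, the first on `(2 * a, π)`. -/
def correlationDomain (a : ℝ) : Set ℝ :=
  Ioo a (π - a) ∪ Ioo (2 * a) π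

theorem measurableSet_correlationDomain (a : ℝ) : MeasurableSet (correlationDomain a) :=
  measurableSet_Ioo.union measurableSet_Ioo

theorem correlationDomain_subset {a : ℝ} (ha : 0 ≤ a) : correlationDomain a ⊆ Ioo a π :=
  union_subset (Ioo_subset_Ioo_right (by linarith)) (Ioo_subset_Ioo_left (by linarith))

theorem sub_half_notMem_Ioo_of_mem_correlationDomain {a b y : ℝ} (h : π ≤ 3 * a / 2 + b)
    (hy : y ∈ correlationDomain a) : y - a / 2 ∉ Ioo b (π - b) := by
  rintro ⟨hby, hyb⟩
  rcases hy with ⟨-, hy⟩ | ⟨hy, -⟩ <;> linarith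

section Recovery

variable {a₁ a₂ : ℝ} {p q p' q' : ℝ → ℂ × ℂ}

theorem potentialCorrelation_congr_of_correlationDomain {a : ℝ} {f f' : ℝ → ℂ × ℂ}
    (hf : f =ᵐ[volume.restrict (correlationDomain a)] f') :
    potentialCorrelation a a f f = potentialCorrelation a a f' f' := by
  refine potentialCorrelation_congr_ae (ae_restrict_of_ae_restrict_of_subset ?_ hf)
    (ae_restrict_of_ae_restrict_of_subset subset_union_left hf)
  rw [← two_mul]
  exact subset_union_right

theorem ae_eq_correlationDomain_of_oddPart (ha₁ : 0 ≤ a₁) (h : π ≤ 2 * a₁ + a₂ / 2)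
    (hodd : oddPart a₁ a₂ p q =ᵐ[volume.restrict (Ioo (a₁ / 2) (π - a₁ / 2))]
      oddPart a₁ a₂ p' q') :
    p =ᵐ[volume.restrict (correlationDomain a₁)] p' := by
  refine ae_eq_of_translate_sub_ae_eq (measurableSet_correlationDomain a₁) measurableSet_Ioo hodd
    (fun y hy ↦ ?_) fun y hy ↦ ?_
  · obtain ⟨hay, hyπ⟩ := correlationDomain_subset ha₁ hy
    exact ⟨by linarith, by linarith⟩
  · have hy₁₂ : y - a₁ / 2 ∉ Ioo ((a₁ + a₂) / 2) (π - (a₁ + a₂) / 2) :=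
      sub_half_notMem_Ioo_of_mem_correlationDomain (by linarith) hy
    have hy₂₁ := add_comm a₁ a₂ ▸ hy₁₂
    simp only [potentialCorrelation_of_notMem _ _ hy₁₂, potentialCorrelation_of_notMem _ _ hy₂₁]

theorem ae_eq_correlationDomain_of_evenPart (h₁₂ : a₁ ≤ a₂) (ha₂ : 2 * π / 5 ≤ a₂)
    (hpp : potentialCorrelation a₁ a₁ p p = potentialCorrelation a₁ a₁ p' p')
    (heven : evenPart a₁ a₂ p q =ᵐ[volume.restrict (Ioo (a₁ / 2) (π - a₁ / 2))]
      evenPart a₁ a₂ p' q') :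
    q =ᵐ[volume.restrict (correlationDomain a₂)] q' := by
  refine ae_eq_of_translate_sub_ae_eq (measurableSet_correlationDomain a₂) measurableSet_Ioo heven
    (fun y hy ↦ ?_) fun y hy ↦ ?_
  · obtain ⟨hay, hyπ⟩ := correlationDomain_subset (by linarith [pi_pos]) hy
    exact ⟨by linarith, by linarith⟩
  · have hy₂₂ : y - a₂ / 2 ∉ Ioo ((a₂ + a₂) / 2) (π - (a₂ + a₂) / 2) :=
      sub_half_notMem_Ioo_of_mem_correlationDomain (by linarith) hy
    simp only [hpp, potentialCorrelation_of_notMem _ _ hy₂₂]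

theorem ae_eq_of_evenPart (h₁₂ : a₁ ≤ a₂)
    (hpp : potentialCorrelation a₁ a₁ p p = potentialCorrelation a₁ a₁ p' p')
    (hqq : potentialCorrelation a₂ a₂ q q = potentialCorrelation a₂ a₂ q' q')
    (heven : evenPart a₁ a₂ p q =ᵐ[volume.restrict (Ioo (a₁ / 2) (π - a₁ / 2))]
      evenPart a₁ a₂ p' q') :
    q =ᵐ[volume.restrict (Ioo a₂ π)] q' :=
  ae_eq_of_translate_sub_ae_eq measurableSet_Ioo measurableSet_Ioo heven
    (fun _ hy ↦ ⟨by linarith [hy.1], by linarith [hy.2]⟩) fun _ _ ↦ by rw [hpp, hqq]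

theorem ae_eq_of_oddPart (ha₁ : 0 ≤ a₁) (h₁₂ : a₁ ≤ a₂)
    (hp : p =ᵐ[volume.restrict (correlationDomain a₁)] p')
    (hq : q =ᵐ[volume.restrict (Ioo a₂ π)] q')
    (hodd : oddPart a₁ a₂ p q =ᵐ[volume.restrict (Ioo (a₁ / 2) (π - a₁ / 2))]
      oddPart a₁ a₂ p' q') :
    p =ᵐ[volume.restrict (Ioo a₁ π)] p' := by
  have hpq : potentialCorrelation a₁ a₂ p q = potentialCorrelation a₁ a₂ p' q' := by
    refine potentialCorrelation_congr_ae (ae_restrict_of_ae_restrict_of_subset ?_ hp)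
      (ae_restrict_of_ae_restrict_of_subset (Ioo_subset_Ioo_right (by linarith)) hq)
    exact (Ioo_subset_Ioo_left (by linarith)).trans subset_union_right
  have hqp : potentialCorrelation a₂ a₁ q p = potentialCorrelation a₂ a₁ q' p' := by
    refine potentialCorrelation_congr_ae
      (ae_restrict_of_ae_restrict_of_subset (Ioo_subset_Ioo_left (by linarith)) hq)
      (ae_restrict_of_ae_restrict_of_subset ?_ hp)
    exact (Ioo_subset_Ioo_right (by linarith)).trans subset_union_left
  exact ae_eq_of_translate_sub_ae_eq measurableSet_Ioo measurableSet_Ioo hodd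
    (fun _ hy ↦ ⟨by linarith [hy.1], by linarith [hy.2]⟩) fun _ _ ↦ by rw [hpq, hqp]

theorem ae_eq_of_oddPart_of_evenPart (ha₁ : 0 ≤ a₁) (h₁₂ : a₁ ≤ a₂) (ha₂ : 2 * π / 5 ≤ a₂)
    (h : π ≤ 2 * a₁ + a₂ / 2)
    (hodd : oddPart a₁ a₂ p q =ᵐ[volume.restrict (Ioo (a₁ / 2) (π - a₁ / 2))]
      oddPart a₁ a₂ p' q')
    (heven : evenPart a₁ a₂ p q =ᵐ[volume.restrict (Ioo (a₁ / 2) (π - a₁ / 2))]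
      evenPart a₁ a₂ p' q') :
    p =ᵐ[volume.restrict (Ioo a₁ π)] p' ∧ q =ᵐ[volume.restrict (Ioo a₂ π)] q' := by
  have hp := ae_eq_correlationDomain_of_oddPart ha₁ h hodd
  have hpp := potentialCorrelation_congr_of_correlationDomain hp
  have hqq := potentialCorrelation_congr_of_correlationDomain
    (ae_eq_correlationDomain_of_evenPart h₁₂ ha₂ hpp heven)
  have hq := ae_eq_of_evenPart h₁₂ hpp hqq heven
  exact ⟨ae_eq_of_oddPart ha₁ h₁₂ hp hq hodd, hq⟩

end Recovery

theorem eq_and_eq_of_neg_one_pow_smul_add_eq {E : Type*} [AddCommGroup E] [Module ℂ E]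
    {u u' v v' : E}
    (h : ∀ m : ℕ, m = 0 ∨ m = 1 → (-1 : ℂ) ^ m • u + v = (-1 : ℂ) ^ m • u' + v') :
    u = u' ∧ v = v' := by
  have h_plus := h 0 (.inl rfl)
  have h_minus := h 1 (.inr rfl)
  simp only [pow_zero, pow_one] at h_plus h_minus
  constructor
  · linear_combination (norm := module) (1 / 2 : ℂ) • h_plus - (1 / 2 : ℂ) • h_minus
  · linear_combination (norm := module) (1 / 2 : ℂ) • h_plus + (1 / 2 : ℂ) • h_minus

theorem uniqueness_theorem_general {a₁ a₂ : ℝ} (ha₁ : 0 ≤ a₁) (h₁₂ : a₁ ≤ a₂)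
    (ha₂ : 2 * π / 5 ≤ a₂) (h : π ≤ 2 * a₁ + a₂ / 2) {p₁ p₂ q₁ q₂ p₁' p₂' q₁' q₂' : ℝ → ℂ}
    (hK : ∀ m : ℕ, m = 0 ∨ m = 1 → ∀ᵐ x ∂(volume.restrict (Ioo (a₁ / 2) (π - a₁ / 2))),
      Kfun a₁ a₂ m p₁ p₂ q₁ q₂ x = Kfun a₁ a₂ m p₁' p₂' q₁' q₂' x)
    (hG : ∀ m : ℕ, m = 0 ∨ m = 1 → ∀ᵐ x ∂(volume.restrict (Ioo (a₁ / 2) (π - a₁ / 2))),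
      Gfun a₁ a₂ m p₁ p₂ q₁ q₂ x = Gfun a₁ a₂ m p₁' p₂' q₁' q₂' x) :
    (∀ᵐ x ∂(volume.restrict (Ioo a₁ π)), p₁ x = p₁' x ∧ p₂ x = p₂' x) ∧
    (∀ᵐ x ∂(volume.restrict (Ioo a₂ π)), q₁ x = q₁' x ∧ q₂ x = q₂' x) := by
  have hparts : ∀ᵐ x ∂(volume.restrict (Ioo (a₁ / 2) (π - a₁ / 2))),
      oddPart a₁ a₂ (fun t ↦ (p₁ t, p₂ t)) (fun t ↦ (q₁ t, q₂ t)) x =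
          oddPart a₁ a₂ (fun t ↦ (p₁' t, p₂' t)) (fun t ↦ (q₁' t, q₂' t)) x ∧
        evenPart a₁ a₂ (fun t ↦ (p₁ t, p₂ t)) (fun t ↦ (q₁ t, q₂ t)) x =
          evenPart a₁ a₂ (fun t ↦ (p₁' t, p₂' t)) (fun t ↦ (q₁' t, q₂' t)) x := by
    filter_upwards [hK 0 (.inl rfl), hK 1 (.inr rfl), hG 0 (.inl rfl), hG 1 (.inr rfl)]
      with x hK₀ hK₁ hG₀ hG₁
    refine eq_and_eq_of_neg_one_pow_smul_add_eq fun m hm ↦ ?_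
    rw [← Kfun_prodMk_Gfun_eq, ← Kfun_prodMk_Gfun_eq]
    rcases hm with rfl | rfl
    · rw [hK₀, hG₀]
    · rw [hK₁, hG₁]
  simpa only [Filter.EventuallyEq, Prod.mk.injEq] using ae_eq_of_oddPart_of_evenPart ha₁ h₁₂ ha₂ h
    (hparts.mono fun _ hx ↦ hx.1) (hparts.mono fun _ hx ↦ hx.2)

/-- Uniqueness theorem: for `π/3 ≤ a₁ < 2π/5 < a₂ < π` with `2a₁ + a₂/2 ≥ π`, if the
functions `K^m, G^m` built from `(p₁,p₂,q₁,q₂)` and from `(p̃₁,p̃₂,q̃₁,q̃₂)` coincide a.e.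
on `(a₁/2, π−a₁/2)` for `m = 0, 1`, then `p_k = p̃_k` a.e. on `(a₁,π)` and `q_k = q̃_k`
a.e. on `(a₂,π)`. -/
theorem uniqueness_theorem (a₁ a₂ : ℝ)
    (ha₁ : π / 3 ≤ a₁) (ha₁' : a₁ < 2 * π / 5)
    (ha₂ : 2 * π / 5 < a₂) (ha₂' : a₂ < π)
    (hge : π ≤ 2 * a₁ + a₂ / 2)
    (p₁ p₂ q₁ q₂ p₁' p₂' q₁' q₂' : ℝ → ℂ)
    (hp₁ : MemLp p₁ 2 (volume.restrict (Ioo 0 π)))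
    (hp₂ : MemLp p₂ 2 (volume.restrict (Ioo 0 π)))
    (hq₁ : MemLp q₁ 2 (volume.restrict (Ioo 0 π)))
    (hq₂ : MemLp q₂ 2 (volume.restrict (Ioo 0 π)))
    (hp₁' : MemLp p₁' 2 (volume.restrict (Ioo 0 π)))
    (hp₂' : MemLp p₂' 2 (volume.restrict (Ioo 0 π)))
    (hq₁' : MemLp q₁' 2 (volume.restrict (Ioo 0 π)))
    (hq₂' : MemLp q₂' 2 (volume.restrict (Ioo 0 π)))
    (hp₁e : ∀ x, x ∉ Ioo 0 π → p₁ x = 0) (hp₂e : ∀ x, x ∉ Ioo 0 π → p₂ x = 0)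
    (hq₁e : ∀ x, x ∉ Ioo 0 π → q₁ x = 0) (hq₂e : ∀ x, x ∉ Ioo 0 π → q₂ x = 0)
    (hp₁e' : ∀ x, x ∉ Ioo 0 π → p₁' x = 0) (hp₂e' : ∀ x, x ∉ Ioo 0 π → p₂' x = 0)
    (hq₁e' : ∀ x, x ∉ Ioo 0 π → q₁' x = 0) (hq₂e' : ∀ x, x ∉ Ioo 0 π → q₂' x = 0)
    (hp₁0 : ∀ᵐ x ∂(volume : Measure ℝ), x ∈ Ioo 0 a₁ → p₁ x = 0)
    (hp₂0 : ∀ᵐ x ∂(volume : Measure ℝ), x ∈ Ioo 0 a₁ → p₂ x = 0)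
    (hp₁0' : ∀ᵐ x ∂(volume : Measure ℝ), x ∈ Ioo 0 a₁ → p₁' x = 0)
    (hp₂0' : ∀ᵐ x ∂(volume : Measure ℝ), x ∈ Ioo 0 a₁ → p₂' x = 0)
    (hq₁0 : ∀ᵐ x ∂(volume : Measure ℝ), x ∈ Ioo 0 a₂ → q₁ x = 0)
    (hq₂0 : ∀ᵐ x ∂(volume : Measure ℝ), x ∈ Ioo 0 a₂ → q₂ x = 0)
    (hq₁0' : ∀ᵐ x ∂(volume : Measure ℝ), x ∈ Ioo 0 a₂ → q₁' x = 0)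
    (hq₂0' : ∀ᵐ x ∂(volume : Measure ℝ), x ∈ Ioo 0 a₂ → q₂' x = 0)
    (hK : ∀ m : ℕ, m = 0 ∨ m = 1 →
      ∀ᵐ x ∂(volume.restrict (Ioo (a₁ / 2) (π - a₁ / 2))),
        Kfun a₁ a₂ m p₁ p₂ q₁ q₂ x = Kfun a₁ a₂ m p₁' p₂' q₁' q₂' x)
    (hG : ∀ m : ℕ, m = 0 ∨ m = 1 →
      ∀ᵐ x ∂(volume.restrict (Ioo (a₁ / 2) (π - a₁ / 2))),
        Gfun a₁ a₂ m p₁ p₂ q₁ q₂ x = Gfun a₁ a₂ m p₁' p₂' q₁' q₂' x) :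
    (∀ᵐ x ∂(volume.restrict (Ioo a₁ π)), p₁ x = p₁' x ∧ p₂ x = p₂' x) ∧
    (∀ᵐ x ∂(volume.restrict (Ioo a₂ π)), q₁ x = q₁' x ∧ q₂ x = q₂' x) :=
  uniqueness_theorem_general (by linarith [pi_pos]) (by linarith) ha₂.le hge hK hG
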